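/- Let S be a measurable space and let P and Q be probability kernels from S to ℝ^d with finite first moments. Then P_θ ≤cx Q_θ holds for every θ ∈ S if and only if P and Q admit a pointwise coupling R such that R_θ is a martingale coupling for every θ ∈ S. -/

import Mathlib

open MeasureTheory ProbabilityTheory Filter

noncomputable section

abbrev Euc (d : ℕ) : Type := EuclideanSpace ℝ (Fin d)

def FiniteFirstMoment {d : ℕ} (μ : Measure (Euc d)) : Prop :=
  Integrable (fun x => x) μ

def ConvexOrder {d : ℕ} (μ ν : Measure (Euc d)) : Prop :=
  ∀ φ : Euc d → ℝ, ConvexOn ℝ Set.univ φ → Integrable φ μ → Integrable φ ν →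
    ∫ x, φ x ∂μ ≤ ∫ x, φ x ∂ν

def CoordMono {d : ℕ} (φ : Euc d → ℝ) : Prop :=
  ∀ x y : Euc d, (∀ i, x i ≤ y i) → φ x ≤ φ y

def IncConvexOrder {d : ℕ} (μ ν : Measure (Euc d)) : Prop :=
  ∀ φ : Euc d → ℝ, ConvexOn ℝ Set.univ φ → CoordMono φ → Integrable φ μ → Integrable φ ν →
    ∫ x, φ x ∂μ ≤ ∫ x, φ x ∂ν

def IsCoupling {d : ℕ} (lam : Measure (Euc d × Euc d)) (μ ν : Measure (Euc d)) : Prop :=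
  lam.map Prod.fst = μ ∧ lam.map Prod.snd = ν

def fstSigma (d : ℕ) : MeasurableSpace (Euc d × Euc d) :=
  MeasurableSpace.comap Prod.fst inferInstance

def IsMartingaleCoupling {d : ℕ} (lam : Measure (Euc d × Euc d)) : Prop :=
  lam[(fun p : Euc d × Euc d => p.2) | fstSigma d] =ᵐ[lam] (fun p => p.1)

def IsSubmartingaleCoupling {d : ℕ} (lam : Measure (Euc d × Euc d)) : Prop :=
  ∀ᵐ p ∂lam, ∀ i, p.1 i ≤ (lam[(fun q : Euc d × Euc d => q.2) | fstSigma d]) p i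

/-!
A martingale coupling of `μ` and `ν` integrates each test function
`f(x) + g(y) + ∑ i, h_i(x) (y_i - x_i)` to `∫ f dμ + ∫ g dν`, and these integrals characterise the
martingale couplings. The convex order says that they are a positive prescription: if a test
function is nonnegative, then the supremum over `x` of the affine functions
`y ↦ -f(x) - ∑ i, h_i(x) (y_i - x_i)` is a convex function that lies between `-f` and `g`. The
M. Riesz extension theorem extends the prescription to a positive functional on the continuous
functions of linear growth, and the Riesz–Markov–Kakutani theorem represents the extension by a
measure.

Measurability in the parameter requires an extension without choices. Since a countable family of
test functions suffices, the upper functional of the extension problem is a countable infimum. A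
positive linear functional below it is obtained by making it linear along the terms of a dense
sequence, one after the other, where each step is again a countable infimum.

Conversely, a martingale coupling forces the convex order by the conditional Jensen inequality.
-/

section Sublinear

variable {L : Type*} [AddCommGroup L] {p : L → ℝ}

/-- Sublinear functionals on an additive group: subadditive and homogeneous over `ℕ`, the only
scalars that the linearization below needs. -/
structure IsSublinear (p : L → ℝ) : Prop where
  add_le : ∀ x y, p (x + y) ≤ p x + p y
  map_nsmul : ∀ (n : ℕ) x, p (n • x) = n * p x

/-- The functional obtained from the sublinear functional `p` by making it linear along `a`: the
one-sided directional derivative of `p` at `a`. -/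
def linearizeAt (p : L → ℝ) (a x : L) : ℝ := ⨅ k : ℕ, (p (x + k • a) - k * p a)

/-- The iterates of `linearizeAt` along the terms of a sequence. -/
def linearizeSeq (p : L → ℝ) (A : ℕ → L) : ℕ → L → ℝ
  | 0 => p
  | n + 1 => linearizeAt (linearizeSeq p A n) (A n)

/-- The limit of `linearizeSeq`: a canonical minorant of the sublinear functional `p` that is linear
along every term of the sequence. It replaces the choice made by the Hahn–Banach theorem. -/
def linearize (p : L → ℝ) (A : ℕ → L) (x : L) : ℝ := ⨅ n, linearizeSeq p A n x

namespace IsSublinear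

theorem map_zero (hp : IsSublinear p) : p 0 = 0 := by
  simpa using hp.map_nsmul 0 0

theorem neg_map_neg_le (hp : IsSublinear p) (x : L) : -p (-x) ≤ p x := by
  have h := hp.add_le x (-x)
  rw [add_neg_cancel, hp.map_zero] at h
  linarith

theorem bddBelow_range_linearizeAt (hp : IsSublinear p) (a x : L) :
    BddBelow (Set.range fun k : ℕ => p (x + k • a) - k * p a) := by
  refine ⟨-p (-x), ?_⟩
  rintro _ ⟨k, rfl⟩
  have h := hp.add_le (x + k • a) (-x)
  rw [add_neg_cancel_comm, hp.map_nsmul] at h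
  linarith

theorem linearizeAt_le (hp : IsSublinear p) (a x : L) (k : ℕ) :
    linearizeAt p a x ≤ p (x + k • a) - k * p a :=
  ciInf_le (hp.bddBelow_range_linearizeAt a x) k

theorem linearizeAt_le_self (hp : IsSublinear p) (a x : L) : linearizeAt p a x ≤ p x := by
  simpa using hp.linearizeAt_le a x 0

theorem antitone_sub_mul (hp : IsSublinear p) (a x : L) :
    Antitone fun k : ℕ => p (x + k • a) - k * p a := by
  refine antitone_nat_of_succ_le fun k => ?_
  have h := hp.add_le (x + k • a) a
  rw [add_assoc, ← succ_nsmul] at h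
  push_cast
  linarith

theorem linearizeAt_add_le (hp : IsSublinear p) (a x y : L) :
    linearizeAt p a (x + y) ≤ linearizeAt p a x + linearizeAt p a y := by
  refine le_ciInf_add_ciInf fun k l => (hp.linearizeAt_le a (x + y) (k + l)).trans ?_
  have h := hp.add_le (x + k • a) (y + l • a)
  rw [add_add_add_comm, ← add_nsmul] at h
  push_cast
  linarith

theorem linearizeAt_nsmul (hp : IsSublinear p) (a : L) (n : ℕ) (x : L) :
    linearizeAt p a (n • x) = n * linearizeAt p a x := by
  obtain rfl | hn := n.eq_zero_or_pos
  · simp [linearizeAt, hp.map_nsmul]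
  have h_eq (k : ℕ) :
      p (n • x + (n * k) • a) - (n * k : ℕ) * p a = n * (p (x + k • a) - k * p a) := by
    rw [mul_nsmul', ← nsmul_add, hp.map_nsmul]
    push_cast
    ring
  apply le_antisymm
  · rw [linearizeAt, linearizeAt, Real.mul_iInf_of_nonneg n.cast_nonneg]
    exact le_ciInf fun k => (hp.linearizeAt_le a (n • x) (n * k)).trans (h_eq k).le
  · refine le_ciInf fun k => ?_
    calc n * linearizeAt p a x
        ≤ n * (p (x + k • a) - k * p a) :=
          mul_le_mul_of_nonneg_left (hp.linearizeAt_le a x k) n.cast_nonneg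
      _ = p (n • x + (n * k) • a) - (n * k : ℕ) * p a := (h_eq k).symm
      _ ≤ p (n • x + k • a) - k * p a :=
          hp.antitone_sub_mul a (n • x) (Nat.le_mul_of_pos_left k hn)

protected theorem linearizeAt (hp : IsSublinear p) (a : L) : IsSublinear (linearizeAt p a) :=
  ⟨hp.linearizeAt_add_le a, hp.linearizeAt_nsmul a⟩

theorem linearizeAt_add_linearizeAt_neg_le (hp : IsSublinear p) (a : L) :
    linearizeAt p a a + linearizeAt p a (-a) ≤ 0 := by
  have h_neg := hp.linearizeAt_le a (-a) 1
  rw [one_nsmul, neg_add_cancel, hp.map_zero, Nat.cast_one, one_mul] at h_neg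
  linarith [hp.linearizeAt_le_self a a]

protected theorem linearizeSeq (hp : IsSublinear p) (A : ℕ → L) :
    ∀ n, IsSublinear (linearizeSeq p A n)
  | 0 => hp
  | n + 1 => (hp.linearizeSeq A n).linearizeAt (A n)

theorem antitone_linearizeSeq (hp : IsSublinear p) (A : ℕ → L) (x : L) :
    Antitone fun n => linearizeSeq p A n x :=
  antitone_nat_of_succ_le fun n => (hp.linearizeSeq A n).linearizeAt_le_self (A n) x

theorem bddBelow_range_linearizeSeq (hp : IsSublinear p) (A : ℕ → L) (x : L) :
    BddBelow (Set.range fun n => linearizeSeq p A n x) := by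
  refine ⟨-p (-x), ?_⟩
  rintro _ ⟨n, rfl⟩
  exact (neg_le_neg (hp.antitone_linearizeSeq A (-x) n.zero_le)).trans
    ((hp.linearizeSeq A n).neg_map_neg_le x)

theorem linearize_le_linearizeSeq (hp : IsSublinear p) (A : ℕ → L) (x : L) (n : ℕ) :
    linearize p A x ≤ linearizeSeq p A n x :=
  ciInf_le (hp.bddBelow_range_linearizeSeq A x) n

theorem linearize_le (hp : IsSublinear p) (A : ℕ → L) (x : L) : linearize p A x ≤ p x :=
  hp.linearize_le_linearizeSeq A x 0

protected theorem linearize (hp : IsSublinear p) (A : ℕ → L) : IsSublinear (linearize p A) where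
  add_le x y := by
    refine le_ciInf_add_ciInf fun k l => ?_
    calc linearize p A (x + y)
        ≤ linearizeSeq p A (max k l) (x + y) := hp.linearize_le_linearizeSeq A _ _
      _ ≤ linearizeSeq p A (max k l) x + linearizeSeq p A (max k l) y :=
          (hp.linearizeSeq A _).add_le x y
      _ ≤ linearizeSeq p A k x + linearizeSeq p A l y :=
          add_le_add (hp.antitone_linearizeSeq A x (le_max_left k l))
            (hp.antitone_linearizeSeq A y (le_max_right k l))
  map_nsmul n x := by
    simp only [linearize, (hp.linearizeSeq A _).map_nsmul,
      Real.mul_iInf_of_nonneg n.cast_nonneg]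

theorem linearize_add_linearize_neg_le (hp : IsSublinear p) (A : ℕ → L) (n : ℕ) :
    linearize p A (A n) + linearize p A (-A n) ≤ 0 :=
  (add_le_add (hp.linearize_le_linearizeSeq A _ (n + 1))
    (hp.linearize_le_linearizeSeq A _ (n + 1))).trans
    ((hp.linearizeSeq A n).linearizeAt_add_linearizeAt_neg_le (A n))

theorem map_add_of_map_add_map_neg_le (hp : IsSublinear p) (h : ∀ x, p x + p (-x) ≤ 0) (x y : L) :
    p (x + y) = p x + p y := by
  refine (hp.add_le x y).antisymm ?_
  have hx := hp.add_le (x + y) (-y)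
  rw [add_neg_cancel_right] at hx
  linarith [h y]

end IsSublinear

theorem measurable_linearize {S : Type*} [MeasurableSpace S] {p : S → L → ℝ}
    (hp : ∀ x, Measurable fun θ => p θ x) (A : ℕ → L) (x : L) :
    Measurable fun θ => linearize (p θ) A x := by
  have h_seq (n : ℕ) : ∀ x, Measurable fun θ => linearizeSeq (p θ) A n x := by
    induction n with
    | zero => exact hp
    | succ n ih => exact fun x => .iInf fun k => (ih _).sub ((ih _).const_mul _)
  exact .iInf fun n => h_seq n x

end Sublinear

section UpperExtension

variable {D L : Type*} [AddCommGroup D] [Module ℚ D] [AddCommGroup L] [PartialOrder L]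
  [IsOrderedAddMonoid L] [Module ℚ L] {T : D →ₗ[ℚ] L} {J : D →ₗ[ℚ] ℝ}

/-- The least cost `J c` of a majorant `T c` of `F`: the upper functional of the M. Riesz extension
problem of extending `T c ↦ J c` to a positive functional. -/
def upperExtension (T : D →ₗ[ℚ] L) (J : D →ₗ[ℚ] ℝ) (F : L) : ℝ :=
  ⨅ c : {c // F ≤ T c}, J c

theorem bddBelow_range_upperExtension (hT : ∀ F, ∃ c, F ≤ T c) (hJ : ∀ c, 0 ≤ T c → 0 ≤ J c)
    (F : L) : BddBelow (Set.range fun c : {c // F ≤ T c} => J c) := by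
  obtain ⟨b, hb⟩ := hT (-F)
  refine ⟨-J b, ?_⟩
  rintro _ ⟨⟨c, hc⟩, rfl⟩
  have h := hJ (c + b) (by simpa using add_le_add hc hb)
  rw [map_add] at h
  linarith

theorem upperExtension_le (hT : ∀ F, ∃ c, F ≤ T c) (hJ : ∀ c, 0 ≤ T c → 0 ≤ J c) {F : L} {c : D}
    (hc : F ≤ T c) : upperExtension T J F ≤ J c :=
  ciInf_le (bddBelow_range_upperExtension hT hJ F) ⟨c, hc⟩

theorem isSublinear_upperExtension [PosSMulMono ℚ L] (hT : ∀ F, ∃ c, F ≤ T c)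
    (hJ : ∀ c, 0 ≤ T c → 0 ≤ J c) : IsSublinear (upperExtension T J) := by
  have h_nonempty (F : L) : Nonempty {c // F ≤ T c} := nonempty_subtype.2 (hT F)
  have h_le {F : L} {c : D} := upperExtension_le hT hJ (F := F) (c := c)
  refine ⟨fun F G => le_ciInf_add_ciInf fun ⟨b, hb⟩ ⟨c, hc⟩ => ?_, fun n F => ?_⟩
  · simpa using h_le (c := b + c) (by simpa using add_le_add hb hc)
  obtain rfl | hn := n.eq_zero_or_pos
  · have h_zero : upperExtension T J 0 = 0 :=
      le_antisymm (by simpa using h_le (map_zero T).ge) (le_ciInf fun ⟨c, hc⟩ => hJ c hc)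
    simpa using h_zero
  apply le_antisymm
  · rw [upperExtension, upperExtension, Real.mul_iInf_of_nonneg n.cast_nonneg]
    refine le_ciInf fun ⟨c, hc⟩ => ?_
    calc upperExtension T J (n • F)
        ≤ J (n • c) := h_le (by rw [map_nsmul]; exact nsmul_le_nsmul_right hc n)
      _ = n * J c := by rw [map_nsmul, nsmul_eq_mul]
  · refine le_ciInf fun ⟨c, hc⟩ => ?_
    have hn' : (0 : ℚ) < n := by exact_mod_cast hn
    have h_inv : F ≤ T ((n : ℚ)⁻¹ • c) := by
      have h := smul_le_smul_of_nonneg_left hc (inv_pos.2 hn').le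
      rwa [← Nat.cast_smul_eq_nsmul ℚ, inv_smul_smul₀ hn'.ne', ← map_smul] at h
    calc n * upperExtension T J F
        ≤ n * J ((n : ℚ)⁻¹ • c) := mul_le_mul_of_nonneg_left (h_le h_inv) n.cast_nonneg
      _ = J c := by
          rw [← nsmul_eq_mul, ← map_nsmul, ← Nat.cast_smul_eq_nsmul ℚ, smul_inv_smul₀ hn'.ne']

/-- A measurable form of the M. Riesz extension theorem: by `hA` the sequence `A` is dense for every
upper functional, so that linearizing along `A` already gives a linear functional. -/
theorem exists_measurable_monotone_extension {S : Type*} [MeasurableSpace S] [Countable D]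
    [PosSMulMono ℚ L] {J : S → D →ₗ[ℚ] ℝ} (hJ_meas : ∀ c, Measurable fun θ => J θ c)
    (hT : ∀ F, ∃ c, F ≤ T c) (hJ : ∀ θ c, 0 ≤ T c → 0 ≤ J θ c) {A : ℕ → L}
    (hA : ∀ θ F, ∀ ε > 0, ∃ n c, F - A n ≤ T c ∧ A n - F ≤ T c ∧ J θ c ≤ ε) :
    ∃ Λ : S → L →+ ℝ, (∀ θ, Monotone (Λ θ)) ∧ (∀ θ c, Λ θ (T c) = J θ c) ∧
      ∀ F, Measurable fun θ => Λ θ F := by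
  set p : S → L → ℝ := fun θ => upperExtension T (J θ)
  set q : S → L → ℝ := fun θ => linearize (p θ) A
  have hp (θ) : IsSublinear (p θ) := isSublinear_upperExtension hT (hJ θ)
  have hq (θ) : IsSublinear (q θ) := (hp θ).linearize A
  have hq_le (θ) {F c} (hc : F ≤ T c) : q θ F ≤ J θ c :=
    ((hp θ).linearize_le A F).trans (upperExtension_le hT (hJ θ) hc)
  have hq_neg (θ F) : q θ F + q θ (-F) ≤ 0 := by
    refine le_of_forall_pos_le_add fun ε hε => ?_
    obtain ⟨n, c, hFA, hAF, hc⟩ := hA θ F (ε / 2) (half_pos hε)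
    have h_pos := (hq θ).add_le (A n) (F - A n)
    have h_neg := (hq θ).add_le (-A n) (A n - F)
    rw [add_sub_cancel] at h_pos
    rw [neg_add_eq_sub, sub_sub_cancel_left] at h_neg
    linarith [(hp θ).linearize_add_linearize_neg_le A n, hq_le θ hFA, hq_le θ hAF]
  let Λ (θ : S) : L →+ ℝ :=
    { toFun := q θ
      map_zero' := (hq θ).map_zero
      map_add' := (hq θ).map_add_of_map_add_map_neg_le (hq_neg θ) }
  refine ⟨Λ, fun θ F G hFG => ?_, fun θ c => (hq_le θ le_rfl).antisymm ?_, fun F => ?_⟩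
  · have h : Λ θ (F - G) ≤ J θ 0 := hq_le θ (by simpa using hFG)
    simpa using h
  · have h : Λ θ (-T c) ≤ J θ (-c) := hq_le θ (map_neg T c).ge
    rw [map_neg, map_neg] at h
    exact neg_le_neg_iff.1 h
  · exact measurable_linearize (p := p) (fun F => .iInf fun c => hJ_meas c) A F

end UpperExtension

section GrowthSpace

open scoped CompactlySupported

variable {X : Type*} [TopologicalSpace X]

/-- The continuous functions that grow at most like the weight `w`. -/
def growthSpace (w : C(X, ℝ)) : Submodule ℝ C(X, ℝ) where
  carrier := {f | f =O[⊤] w}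
  add_mem' hf hg := hf.add hg
  zero_mem' := Asymptotics.isBigO_zero _ _
  smul_mem' c _ hf := hf.const_smul_left c

namespace growthSpace

variable {w : C(X, ℝ)}

instance : PosSMulMono ℚ (growthSpace w) where
  smul_le_smul_of_nonneg_left _ hr _ _ hFG x := smul_le_smul_of_nonneg_left (hFG x) hr

theorem exists_nat_abs_le (hw : 0 ≤ w) (F : growthSpace w) : ∃ N : ℕ, ∀ x, |F.1 x| ≤ N * w x := by
  obtain ⟨C, hC⟩ := Asymptotics.isBigO_top.1 F.2
  obtain ⟨N, hN⟩ := exists_nat_ge C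
  refine ⟨N, fun x => (hC x).trans ?_⟩
  rw [Real.norm_of_nonneg (show 0 ≤ w x from hw x)]
  exact mul_le_mul_of_nonneg_right hN (hw x)

/-- The weight as an element of its growth space. -/
def weight (w : C(X, ℝ)) : growthSpace w := ⟨w, Asymptotics.isBigO_refl _ _⟩

/-- The embedding of the compactly supported functions for a weight bounded away from zero. -/
def ofCompactlySupported (hw : 1 ≤ w) : C_c(X, ℝ) →+ growthSpace w where
  toFun f := ⟨f.toContinuousMap, by
    obtain ⟨C, hC⟩ := f.hasCompactSupport.exists_bound_of_continuous f.continuous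
    refine Asymptotics.isBigO_top.2 ⟨C, fun x => (hC x).trans ?_⟩
    exact le_mul_of_one_le_right ((norm_nonneg _).trans (hC x)) ((hw x).trans (le_abs_self _))⟩
  map_zero' := rfl
  map_add' _ _ := rfl

theorem ofCompactlySupported_apply (hw : 1 ≤ w) (f : C_c(X, ℝ)) (x : X) :
    (ofCompactlySupported hw f).1 x = f x := rfl

variable [MeasurableSpace X] [OpensMeasurableSpace X] {μ : Measure X}

theorem integrable (hwμ : Integrable w μ) (F : growthSpace w) : Integrable F.1 μ :=
  F.2.integrable F.1.continuous.aestronglyMeasurable hwμ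

/-- The integral as an additive functional on the functions of integrable growth. -/
def integralHom (hwμ : Integrable w μ) : growthSpace w →+ ℝ :=
  .mk' (fun F => ∫ x, F.1 x ∂μ) fun F G => integral_add (integrable hwμ F) (integrable hwμ G)

end growthSpace

end GrowthSpace

section Cutoff

open scoped CompactlySupported

variable {V : Type*} [NormedAddCommGroup V]

/-- Continuous cutoff functions: `cutoff n` is `1` on the ball of radius `n` and vanishes outside
the ball of radius `n + 1`. -/
def cutoff [ProperSpace V] (n : ℕ) : C_c(V, ℝ) where
  toFun x := max 0 (min 1 (n + 1 - ‖x‖))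
  continuous_toFun := by fun_prop
  hasCompactSupport' := by
    refine .intro (isCompact_closedBall 0 (n + 1)) fun x hx => ?_
    rw [mem_closedBall_zero_iff, not_le] at hx
    exact max_eq_left ((min_le_right _ _).trans (by linarith))

variable [ProperSpace V]

theorem cutoff_apply (n : ℕ) (x : V) : cutoff n x = max 0 (min 1 (n + 1 - ‖x‖)) := rfl

theorem cutoff_nonneg (n : ℕ) (x : V) : 0 ≤ cutoff n x := le_max_left _ _

theorem cutoff_le_one (n : ℕ) (x : V) : cutoff n x ≤ 1 := max_le zero_le_one (min_le_left _ _)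

theorem cutoff_eq_one {n : ℕ} {x : V} (h : ‖x‖ ≤ n) : cutoff n x = 1 := by
  rw [cutoff_apply, min_eq_left (by linarith), max_eq_right zero_le_one]

theorem eventually_cutoff_eq_one (x : V) : ∀ᶠ n : ℕ in atTop, cutoff n x = 1 := by
  obtain ⟨N, hN⟩ := exists_nat_ge ‖x‖
  filter_upwards [eventually_ge_atTop N] with n hn
  exact cutoff_eq_one (hN.trans (Nat.cast_le.2 hn))

theorem exists_cutoff_mul_eq (f : C_c(V, ℝ)) : ∃ n, ∀ x, cutoff n x * f x = f x := by
  obtain ⟨r, hr⟩ := f.hasCompactSupport.isCompact.isBounded.subset_closedBall 0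
  obtain ⟨n, hn⟩ := exists_nat_ge r
  refine ⟨n, fun x => ?_⟩
  by_cases hx : x ∈ tsupport f
  · rw [cutoff_eq_one ((mem_closedBall_zero_iff.1 (hr hx)).trans hn), one_mul]
  · rw [image_eq_zero_of_notMem_tsupport hx, mul_zero]

/-- The compactly supported truncations of a continuous function. -/
def truncate (n : ℕ) (F : C(V, ℝ)) : C_c(V, ℝ) := F • cutoff n

theorem truncate_apply (n : ℕ) (F : C(V, ℝ)) (x : V) : truncate n F x = F x * cutoff n x := rfl

theorem abs_truncate_le (n : ℕ) (F : C(V, ℝ)) (x : V) : |truncate n F x| ≤ |F x| := by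
  rw [truncate_apply, abs_mul, abs_of_nonneg (cutoff_nonneg n x)]
  exact mul_le_of_le_one_right (abs_nonneg _) (cutoff_le_one n x)

theorem abs_sub_truncate (n : ℕ) (F : C(V, ℝ)) (x : V) :
    |F x - truncate n F x| = |F x| * (1 - cutoff n x) := by
  rw [truncate_apply, ← mul_one_sub, abs_mul, abs_of_nonneg (sub_nonneg.2 (cutoff_le_one n x))]

theorem tendsto_truncate (F : C(V, ℝ)) (x : V) :
    Tendsto (fun n => truncate n F x) atTop (nhds (F x)) := by
  refine tendsto_const_nhds.congr' ((eventually_cutoff_eq_one x).mono fun n hn => ?_)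
  simp only [truncate_apply, hn, mul_one]

theorem exists_forall_abs_truncate_sub_le {s : Set C(V, ℝ)} (hs : Dense s) (n : ℕ) (F : C(V, ℝ))
    {ε : ℝ} (hε : 0 < ε) : ∃ G ∈ s, ∀ x, |truncate n F x - truncate n G x| ≤ ε := by
  have h_basis := nhds_basis_uniformity' (x := F)
    Metric.uniformity_basis_dist.compactConvergenceUniformity
  obtain ⟨G, hG, hGs⟩ := mem_closure_iff_nhds.1 (hs F) _
    (h_basis.mem_of_mem (i := (Metric.closedBall 0 (n + 1), ε)) ⟨isCompact_closedBall _ _, hε⟩)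
  refine ⟨G, hGs, fun x => ?_⟩
  rw [truncate_apply, truncate_apply, ← sub_mul, abs_mul, abs_of_nonneg (cutoff_nonneg n x)]
  by_cases hx : ‖x‖ ≤ n + 1
  · exact (mul_le_of_le_one_right (abs_nonneg _) (cutoff_le_one n x)).trans
      (hG x (mem_closedBall_zero_iff.2 hx)).le
  · have h_zero : cutoff n x = 0 :=
      max_eq_left ((min_le_right _ _).trans (by linarith))
    rw [h_zero, mul_zero]
    exact hε.le

/-- The sequence `a` is dense in the compactly supported functions for uniform convergence. -/
def UniformlyDense {X : Type*} [TopologicalSpace X] (a : ℕ → C_c(X, ℝ)) : Prop :=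
  ∀ f : C_c(X, ℝ), ∀ ε > 0, ∃ n, ∀ x, |f x - a n x| ≤ ε

theorem exists_uniformlyDense (V : Type*) [NormedAddCommGroup V] [ProperSpace V] :
    ∃ a : ℕ → C_c(V, ℝ), UniformlyDense a := by
  refine ⟨fun n => truncate n.unpair.1 (TopologicalSpace.denseSeq C(V, ℝ) n.unpair.2),
    fun f ε hε => ?_⟩
  obtain ⟨m, hm⟩ := exists_cutoff_mul_eq f
  obtain ⟨_, ⟨k, rfl⟩, hk⟩ := exists_forall_abs_truncate_sub_le
    (TopologicalSpace.denseRange_denseSeq C(V, ℝ)) m f.toContinuousMap hε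
  refine ⟨Nat.pair m k, fun x => ?_⟩
  have h_trunc : truncate m f.toContinuousMap x = f x := (mul_comm _ _).trans (hm x)
  simpa only [h_trunc, Nat.unpair_pair] using hk x

end Cutoff

section RieszMarkov

open scoped CompactlySupported

theorem map_real_smul_of_monotone {E : Type*} [AddCommGroup E] [PartialOrder E]
    [IsOrderedAddMonoid E] [IsDirectedOrder E] [Module ℝ E] [SMulPosMono ℝ E] {Λ : E →+ ℝ}
    (hΛ : Monotone Λ) (r : ℝ) (x : E) : Λ (r • x) = r * Λ x := by
  -- On a ray through a positive vector, `Λ` is additive and monotone in the scalar, hence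
  -- measurable, hence continuous, hence linear.
  have h_pos (y : E) (hy : 0 ≤ y) : Λ (r • y) = r * Λ y := by
    let f : ℝ →+ ℝ := Λ.comp ((smulAddHom ℝ E).flip y)
    have hf : Monotone f := fun s t hst => hΛ (smul_le_smul_of_nonneg_right hst hy)
    have h := map_real_smul f (Measure.AddMonoidHom.continuous_of_measurable f hf.measurable) r 1
    simpa [f] using h
  obtain ⟨y, hxy, hy⟩ := exists_ge_ge x 0
  have h := h_pos (y - x) (sub_nonneg.2 hxy)
  rw [smul_sub, map_sub, map_sub, h_pos y hy] at h
  linarith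

instance {X : Type*} [TopologicalSpace X] : SMulPosMono ℝ C_c(X, ℝ) where
  smul_le_smul_of_nonneg_right _ hf _ _ hrs x := smul_le_smul_of_nonneg_right hrs (hf x)

theorem exists_regular_forall_integral_eq {X : Type*} [TopologicalSpace X] [T2Space X]
    [LocallyCompactSpace X] [MeasurableSpace X] [BorelSpace X] {Λ : C_c(X, ℝ) →+ ℝ}
    (hΛ : Monotone Λ) : ∃ π : Measure X, π.Regular ∧ ∀ f : C_c(X, ℝ), ∫ x, f x ∂π = Λ f := by
  let Λ' : C_c(X, ℝ) →ₚ[ℝ] ℝ :=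
    .mk₀ { Λ with map_smul' := map_real_smul_of_monotone hΛ }
      fun f hf => (map_zero Λ).ge.trans (hΛ hf)
  exact ⟨RealRMK.rieszMeasure Λ', inferInstance, RealRMK.integral_rieszMeasure Λ'⟩

variable {V : Type*} [NormedAddCommGroup V] [ProperSpace V] {w : C(V, ℝ)}

namespace growthSpace

/-- The part of the weight that the `n`-th truncation cuts off. -/
def tail (hw : 1 ≤ w) (n : ℕ) : growthSpace w :=
  weight w - ofCompactlySupported hw (truncate n w)

theorem tail_nonneg (hw : 1 ≤ w) (n : ℕ) : 0 ≤ tail hw n := fun x =>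
  sub_nonneg.2 (mul_le_of_le_one_right (zero_le_one.trans (hw x)) (cutoff_le_one n x))

theorem exists_abs_sub_truncate_le_tail (hw : 1 ≤ w) (F : growthSpace w) : ∃ N : ℕ, ∀ n,
    F - ofCompactlySupported hw (truncate n F.1) ≤ N • tail hw n ∧
      ofCompactlySupported hw (truncate n F.1) - F ≤ N • tail hw n := by
  obtain ⟨N, hN⟩ := exists_nat_abs_le (zero_le_one.trans hw) F
  have h_abs (n : ℕ) (x : V) : |F.1 x - truncate n F.1 x| ≤ (N • tail hw n).1 x := by
    calc |F.1 x - truncate n F.1 x|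
        = |F.1 x| * (1 - cutoff n x) := abs_sub_truncate n F.1 x
      _ ≤ N * w x * (1 - cutoff n x) :=
          mul_le_mul_of_nonneg_right (hN x) (sub_nonneg.2 (cutoff_le_one n x))
      _ = N • (w x - truncate n w x) := by rw [truncate_apply, nsmul_eq_mul]; ring
  exact ⟨N, fun n => ⟨fun x => (le_abs_self _).trans (h_abs n x),
    fun x => (le_abs_self _).trans ((abs_sub_comm _ _).trans_le (h_abs n x))⟩⟩

theorem tendsto_map_truncate {Λ : growthSpace w →+ ℝ} (hΛ : Monotone Λ) (hw : 1 ≤ w)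
    (h_tail : Tendsto (fun n => Λ (tail hw n)) atTop (nhds 0)) (F : growthSpace w) :
    Tendsto (fun n => Λ (ofCompactlySupported hw (truncate n F.1))) atTop (nhds (Λ F)) := by
  obtain ⟨N, hN⟩ := exists_abs_sub_truncate_le_tail hw F
  have h_lim := h_tail.const_mul (N : ℝ)
  rw [mul_zero] at h_lim
  refine tendsto_iff_dist_tendsto_zero.2 (squeeze_zero (fun n => dist_nonneg) (fun n => ?_) h_lim)
  have h_le := hΛ (hN n).1
  have h_ge := hΛ (hN n).2
  rw [map_sub, map_nsmul, nsmul_eq_mul] at h_le h_ge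
  exact abs_sub_le_iff.2 ⟨h_ge, h_le⟩

end growthSpace

variable [MeasurableSpace V] [BorelSpace V]

theorem integrable_of_integral_truncate_le {π : Measure V} [IsFiniteMeasureOnCompacts π]
    (hw : 0 ≤ w) {C : ℝ} (hC : ∀ n, ∫ x, truncate n w x ∂π ≤ C) : Integrable w π := by
  have h_cover : AECover π atTop fun n : ℕ => Metric.closedBall (0 : V) n :=
    aecover_closedBall tendsto_natCast_atTop_atTop
  refine h_cover.integrable_of_integral_norm_bounded C
    (fun n => w.continuous.continuousOn.integrableOn_compact (isCompact_closedBall _ _))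
    (.of_forall fun n => le_trans ?_ (hC n))
  calc ∫ x in Metric.closedBall 0 (n : ℝ), ‖w x‖ ∂π
      = ∫ x in Metric.closedBall 0 (n : ℝ), truncate n w x ∂π := by
        refine setIntegral_congr_fun measurableSet_closedBall fun x hx => ?_
        simp only [truncate_apply, cutoff_eq_one (mem_closedBall_zero_iff.1 hx), mul_one]
        exact Real.norm_of_nonneg (hw x)
    _ ≤ ∫ x, truncate n w x ∂π :=
        setIntegral_le_integral (truncate n w).integrable
          (ae_of_all _ fun x => mul_nonneg (hw x) (cutoff_nonneg n x))

theorem tendsto_integral_truncate {μ : Measure V} {F : C(V, ℝ)} (hF : Integrable F μ) :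
    Tendsto (fun n => ∫ x, truncate n F x ∂μ) atTop (nhds (∫ x, F x ∂μ)) :=
  tendsto_integral_of_dominated_convergence (fun x => |F x|)
    (fun n => (truncate n F).continuous.aestronglyMeasurable) hF.abs
    (fun n => ae_of_all _ (abs_truncate_le n F)) (ae_of_all _ (tendsto_truncate F))

theorem growthSpace.tendsto_integral_tail {μ : Measure V} (hwμ : Integrable w μ) (hw : 1 ≤ w) :
    Tendsto (fun n => ∫ x, (tail hw n).1 x ∂μ) atTop (nhds 0) := by
  have h := (tendsto_integral_truncate hwμ).const_sub (∫ x, w x ∂μ)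
  rw [sub_self] at h
  refine h.congr fun n => (integral_sub hwμ ?_).symm
  exact growthSpace.integrable hwμ (ofCompactlySupported hw (truncate n w))

open growthSpace in
theorem exists_integrable_forall_integral_eq {Λ : growthSpace w →+ ℝ} (hΛ : Monotone Λ)
    (hw : 1 ≤ w) (h_tail : Tendsto (fun n => Λ (tail hw n)) atTop (nhds 0)) :
    ∃ π : Measure V, Integrable w π ∧ ∀ F : growthSpace w, ∫ x, F.1 x ∂π = Λ F := by
  obtain ⟨π, hπ_reg, hπ⟩ := exists_regular_forall_integral_eq
    (Λ := Λ.comp (ofCompactlySupported hw)) (hΛ.comp fun f g hfg => hfg)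
  have hw0 : 0 ≤ w := zero_le_one.trans hw
  have hwπ : Integrable w π := by
    refine integrable_of_integral_truncate_le hw0 (C := Λ (weight w)) fun n => ?_
    rw [hπ]
    exact hΛ fun x => mul_le_of_le_one_right (hw0 x) (cutoff_le_one n x)
  refine ⟨π, hwπ, fun F => ?_⟩
  refine tendsto_nhds_unique ?_ (tendsto_map_truncate hΛ hw h_tail F)
  simp only [← AddMonoidHom.comp_apply, ← hπ]
  exact tendsto_integral_truncate (growthSpace.integrable hwπ F)

end RieszMarkov

section MeasurableMoments

open scoped CompactlySupported BoundedContinuousFunction NNReal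

variable {S : Type*} [MeasurableSpace S]

theorem measurable_of_forall_measurable_integral {X : Type*} [TopologicalSpace X]
    [HasOuterApproxClosed X] [MeasurableSpace X] [BorelSpace X] {μ : S → Measure X}
    [∀ θ, IsFiniteMeasure (μ θ)]
    (h : ∀ f : X →ᵇ ℝ≥0, Measurable fun θ => ∫ x, (f x : ℝ) ∂μ θ) : Measurable μ := by
  have h_closed (C : Set X) (hC : IsClosed C) : Measurable fun θ => μ θ C := by
    refine measurable_of_tendsto_metrizable (f := fun n θ => ∫⁻ x, hC.apprSeq n x ∂μ θ)
      (fun n => ?_)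
      (tendsto_pi_nhds.2 fun θ => HasOuterApproxClosed.tendsto_lintegral_apprSeq hC (μ θ))
    have h_ofReal (θ : S) : ENNReal.ofReal (∫ x, (hC.apprSeq n x : ℝ) ∂μ θ) =
        ∫⁻ x, hC.apprSeq n x ∂μ θ := by
      rw [← BoundedContinuousFunction.toReal_lintegral_coe_eq_integral,
        ENNReal.ofReal_toReal (BoundedContinuousFunction.lintegral_lt_top_of_nnreal _ _).ne]
    simpa only [h_ofReal] using (h (hC.apprSeq n)).ennreal_ofReal
  exact .measure_of_isPiSystem (BorelSpace.measurable_eq.trans borel_eq_generateFrom_isClosed)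
    isPiSystem_isClosed h_closed (h_closed _ isClosed_univ)

theorem isFiniteMeasure_of_integrable_of_one_le {X : Type*} [MeasurableSpace X] {π : Measure X}
    {f : X → ℝ} (hf : Integrable f π) (h_one : ∀ x, 1 ≤ f x) : IsFiniteMeasure π := by
  have h : Integrable (fun _ => (1 : ℝ)) π :=
    hf.mono' aestronglyMeasurable_const (ae_of_all _ fun x => by simpa using h_one x)
  exact (integrable_const_iff_isFiniteMeasure one_ne_zero).1 h

open growthSpace

theorem exists_le_map_of_weight_le {X D : Type*} [TopologicalSpace X] {w : C(X, ℝ)}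
    [AddCommGroup D] [Module ℚ D] {T : D →ₗ[ℚ] growthSpace w} (hw : 0 ≤ w) {e : D}
    (he : weight w ≤ T e) (F : growthSpace w) : ∃ c, F ≤ T c := by
  obtain ⟨N, hN⟩ := exists_nat_abs_le hw F
  refine ⟨N • e, ?_⟩
  rw [map_nsmul]
  refine le_trans (fun x => ?_) (nsmul_le_nsmul_right he N)
  exact ((le_abs_self _).trans (hN x)).trans_eq (nsmul_eq_mul _ _).symm

variable {V D : Type*} [NormedAddCommGroup V] [ProperSpace V] {w : C(V, ℝ)} [AddCommGroup D]
  [Module ℚ D] {T : D →ₗ[ℚ] growthSpace w}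

theorem exists_abs_sub_le_tail_add_weight (hw : 1 ≤ w) {a : ℕ → C_c(V, ℝ)}
    (ha : UniformlyDense a) (F : growthSpace w) :
    ∃ N : ℕ, ∀ m, ∀ δ : ℚ, 0 < δ → ∃ n,
      F - ofCompactlySupported hw (a n) ≤ N • tail hw m + δ • weight w ∧
        ofCompactlySupported hw (a n) - F ≤ N • tail hw m + δ • weight w := by
  obtain ⟨N, hN⟩ := exists_abs_sub_truncate_le_tail hw F
  refine ⟨N, fun m δ hδ => ?_⟩
  obtain ⟨n, hn⟩ := ha (truncate m F.1) δ (Rat.cast_pos.2 hδ)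
  let G := ofCompactlySupported hw (truncate m F.1)
  let A := ofCompactlySupported hw (a n)
  have h_abs (x : V) : |truncate m F.1 x - a n x| ≤ (δ • weight w).1 x :=
    ((hn x).trans (le_mul_of_one_le_right (Rat.cast_nonneg.2 hδ.le) (hw x))).trans_eq
      (Rat.smul_def _ _).symm
  have hGA : G - A ≤ δ • weight w := fun x => (le_abs_self _).trans (h_abs x)
  have hAG : A - G ≤ δ • weight w := fun x =>
    (le_abs_self _).trans ((abs_sub_comm _ _).trans_le (h_abs x))
  exact ⟨n, (sub_add_sub_cancel F G A).symm.trans_le (add_le_add (hN m).1 hGA),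
    (sub_add_sub_cancel' G F A).symm.trans_le (add_le_add (hN m).2 hAG)⟩

theorem exists_small_majorant (hw : 1 ≤ w) {J : D →ₗ[ℚ] ℝ} (hJ : ∀ c, 0 ≤ T c → 0 ≤ J c)
    {e : D} (he : weight w ≤ T e) {t : ℕ → D} (ht : ∀ n, tail hw n ≤ T (t n))
    (hJt : Tendsto (fun n => J (t n)) atTop (nhds 0)) {a : ℕ → C_c(V, ℝ)}
    (ha : UniformlyDense a) (F : growthSpace w) {ε : ℝ} (hε : 0 < ε) :
    ∃ n c, F - ofCompactlySupported hw (a n) ≤ T c ∧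
      ofCompactlySupported hw (a n) - F ≤ T c ∧ J c ≤ ε := by
  obtain ⟨N, hN⟩ := exists_abs_sub_le_tail_add_weight hw ha F
  obtain ⟨m, hm⟩ : ∃ m, N * J (t m) ≤ ε / 2 := by
    have h := hJt.const_mul (N : ℝ)
    rw [mul_zero] at h
    exact (h.eventually (eventually_le_nhds (half_pos hε))).exists
  obtain ⟨δ, hδ, hδε⟩ : ∃ δ : ℚ, 0 < δ ∧ δ * J e ≤ ε / 2 := by
    have hw0 : 0 ≤ w := zero_le_one.trans hw
    have hJe : 0 < J e + 1 :=
      add_pos_of_nonneg_of_pos (hJ e (le_trans (b := weight w) hw0 he)) one_pos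
    obtain ⟨δ, hδ, h⟩ := exists_rat_btwn (div_pos (half_pos hε) hJe)
    rw [lt_div_iff₀ hJe] at h
    exact ⟨δ, Rat.cast_pos.1 hδ, by linarith⟩
  obtain ⟨n, hFA, hAF⟩ := hN m δ hδ
  have h_le : N • tail hw m + δ • weight w ≤ T (N • t m + δ • e) := by
    rw [map_add, map_nsmul, map_smul]
    exact add_le_add (nsmul_le_nsmul_right (ht m) N) (smul_le_smul_of_nonneg_left he hδ.le)
  refine ⟨n, N • t m + δ • e, hFA.trans h_le, hAF.trans h_le, ?_⟩
  rw [map_add, map_nsmul, map_smul, nsmul_eq_mul, Rat.smul_def]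
  linarith

variable [MeasurableSpace V] [BorelSpace V]

/-- The sequence `t` keeps mass from escaping to infinity. -/
theorem exists_kernel_forall_integral_eq [Countable D] {J : S → D →ₗ[ℚ] ℝ}
    (hJ_meas : ∀ c, Measurable fun θ => J θ c) (hw : 1 ≤ w) (hJ : ∀ θ c, 0 ≤ T c → 0 ≤ J θ c)
    {e : D} (he : weight w ≤ T e) {t : ℕ → D} (ht : ∀ n, tail hw n ≤ T (t n))
    (hJt : ∀ θ, Tendsto (fun n => J θ (t n)) atTop (nhds 0)) :
    ∃ π : Kernel S V, ∀ θ, Integrable w (π θ) ∧ ∀ c, ∫ x, (T c).1 x ∂π θ = J θ c := by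
  obtain ⟨a, ha⟩ := exists_uniformlyDense V
  obtain ⟨Λ, hΛ_mono, hΛT, hΛ_meas⟩ := exists_measurable_monotone_extension hJ_meas
    (exists_le_map_of_weight_le (zero_le_one.trans hw) he) hJ
    (A := fun n => ofCompactlySupported hw (a n))
    fun θ F ε hε => exists_small_majorant hw (hJ θ) he ht (hJt θ) ha F hε
  have h_tail (θ : S) : Tendsto (fun n => Λ θ (tail hw n)) atTop (nhds 0) := by
    refine squeeze_zero (fun n => ?_) (fun n => (hΛ_mono θ (ht n)).trans_eq (hΛT θ _)) (hJt θ)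
    rw [← map_zero (Λ θ)]
    exact hΛ_mono θ (tail_nonneg hw n)
  choose π hwπ hπ using fun θ => exists_integrable_forall_integral_eq (hΛ_mono θ) hw (h_tail θ)
  have (θ : S) : IsFiniteMeasure (π θ) := isFiniteMeasure_of_integrable_of_one_le (hwπ θ) hw
  have hπ_meas : Measurable π := by
    refine measurable_of_forall_measurable_integral fun f => ?_
    have hf : .comp ⟨_, NNReal.continuous_coe⟩ f.toContinuousMap ∈ growthSpace w := by
      refine Asymptotics.isBigO_top.2 ⟨nndist 0 f, fun x => ?_⟩
      calc ‖(f x : ℝ)‖ = f x := Real.norm_of_nonneg (f x).2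
        _ ≤ nndist 0 f := f.apply_le_nndist_zero x
        _ ≤ nndist 0 f * ‖w x‖ :=
          le_mul_of_one_le_right NNReal.zero_le_coe ((hw x).trans (le_abs_self _))
    have h := hΛ_meas ⟨_, hf⟩
    simp only [← hπ] at h
    exact h
  exact ⟨⟨π, hπ_meas⟩, fun θ => ⟨hwπ θ, fun c => (hπ θ _).trans (hΛT θ c)⟩⟩

end MeasurableMoments

section ConvexOrder

theorem convexOn_iSup_of_bddAbove {E ι : Type*} [AddCommGroup E] [Module ℝ E] [Nonempty ι]
    {s : Set E} {f : ι → E → ℝ} (hf : ∀ i, ConvexOn ℝ s (f i))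
    (h_bdd : ∀ x, BddAbove (Set.range fun i => f i x)) : ConvexOn ℝ s fun x => ⨆ i, f i x := by
  refine ⟨(hf (Classical.arbitrary ι)).1, fun x hx y hy a b ha hb hab => ciSup_le fun i => ?_⟩
  exact ((hf i).2 hx hy ha hb hab).trans (add_le_add
    (smul_le_smul_of_nonneg_left (le_ciSup (h_bdd x) i) ha)
    (smul_le_smul_of_nonneg_left (le_ciSup (h_bdd y) i) hb))

variable {d : ℕ} {μ ν : Measure (Euc d)}

theorem ConvexOrder.integral_add_integral_nonneg (h : ConvexOrder μ ν) {f g : Euc d → ℝ}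
    (hf : Integrable f (μ + ν)) (hg : Integrable g (μ + ν)) {ℓ : Euc d → Euc d →ₗ[ℝ] ℝ}
    (h_nonneg : ∀ x y, 0 ≤ f x + g y + ℓ x (y - x)) : 0 ≤ ∫ x, f x ∂μ + ∫ y, g y ∂ν := by
  -- The supremum `φ` of the affine minorants of `g` is convex and separates `-f` from `g`.
  let φ (y : Euc d) : ℝ := ⨆ x, (-f x - ℓ x (y - x))
  have h_le_g (x y : Euc d) : -f x - ℓ x (y - x) ≤ g y := by linarith [h_nonneg x y]
  have h_bdd (y : Euc d) : BddAbove (Set.range fun x => -f x - ℓ x (y - x)) :=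
    ⟨g y, Set.forall_mem_range.2 fun x => h_le_g x y⟩
  have hfφ (x : Euc d) : -f x ≤ φ x :=
    (le_ciSup (h_bdd x) x).trans_eq' (by rw [sub_self, map_zero, sub_zero])
  have hφg (y : Euc d) : φ y ≤ g y := ciSup_le fun x => h_le_g x y
  have hφ : ConvexOn ℝ Set.univ φ := by
    refine convexOn_iSup_of_bddAbove (fun x => ?_) h_bdd
    have h_affine : ConvexOn ℝ Set.univ fun y => (-ℓ x) y + (ℓ x x - f x) :=
      ((-ℓ x).convexOn convex_univ).add_const _
    refine h_affine.congr fun y _ => ?_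
    simp only [LinearMap.neg_apply, map_sub]
    ring
  have hφ_cont : Continuous φ := continuousOn_univ.1 (hφ.continuousOn isOpen_univ)
  have hφ_int : Integrable φ (μ + ν) := integrable_of_le_of_le hφ_cont.aestronglyMeasurable
    (ae_of_all _ hfφ) (ae_of_all _ hφg) hf.neg hg
  have h_cx := h φ hφ hφ_int.left_of_add_measure hφ_int.right_of_add_measure
  have h_left := integral_mono hf.left_of_add_measure.neg hφ_int.left_of_add_measure hfφ
  have h_right := integral_mono hφ_int.right_of_add_measure hg.right_of_add_measure hφg
  rw [integral_neg'] at h_left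
  linarith

theorem IsMartingaleCoupling.convexOrder {π : Measure (Euc d × Euc d)} [IsFiniteMeasure π]
    (h_mart : IsMartingaleCoupling π) (hπ : IsCoupling π μ ν) (hν : FiniteFirstMoment ν) :
    ConvexOrder μ ν := by
  obtain ⟨rfl, rfl⟩ := hπ
  intro φ hφ hφX hφY
  have hφ_cont : Continuous φ := continuousOn_univ.1 (hφ.continuousOn isOpen_univ)
  have h_sigma : fstSigma d ≤ Prod.instMeasurableSpace := measurable_fst.comap_le
  have hX : Integrable (fun z => φ z.1) π := hφX.comp_measurable measurable_fst
  have hY : Integrable (fun z => φ z.2) π := hφY.comp_measurable measurable_snd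
  have h_jensen := hφ.map_condExp_le_univ h_sigma hφ_cont.lowerSemicontinuous
    (hν.comp_measurable measurable_snd) hY
  calc ∫ x, φ x ∂π.map Prod.fst
      = ∫ z, φ z.1 ∂π := integral_map measurable_fst.aemeasurable hφ_cont.aestronglyMeasurable
    _ ≤ ∫ z, (π[fun z => φ z.2 | fstSigma d]) z ∂π := by
      refine integral_mono_ae hX integrable_condExp ?_
      filter_upwards [h_mart, h_jensen] with z hz hz_le
      exact (congrArg φ hz).symm.trans_le hz_le
    _ = ∫ z, φ z.2 ∂π := integral_condExp h_sigma
    _ = ∫ y, φ y ∂π.map Prod.snd :=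
      (integral_map measurable_snd.aemeasurable hφ_cont.aestronglyMeasurable).symm

end ConvexOrder

section TestFunctions

open scoped CompactlySupported

theorem condExp_comap_ae_eq_zero {Ω E F : Type*} [MeasurableSpace Ω] {μ : Measure Ω}
    [IsFiniteMeasure μ] [NormedAddCommGroup E] [NormedSpace ℝ E] [FiniteDimensional ℝ E]
    [MeasurableSpace E] [BorelSpace E] [NormedAddCommGroup F] [NormedSpace ℝ F] [CompleteSpace F]
    [SecondCountableTopology F] [MeasurableSpace F] [BorelSpace F] {X : Ω → E} (hX : Measurable X)
    {Z : Ω → F} (hZ : Integrable Z μ) (h : ∀ f : C_c(E, ℝ), ∫ ω, f (X ω) • Z ω ∂μ = 0) :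
    μ[Z | MeasurableSpace.comap X inferInstance] =ᵐ[μ] 0 := by
  let b (x : E) : F := ∫ y, y ∂condDistrib Z X μ x
  have hb : StronglyMeasurable b := stronglyMeasurable_id.integral_kernel
  have h_condExp : μ[Z | .comap X inferInstance] =ᵐ[μ] b ∘ X :=
    condExp_ae_eq_integral_condDistrib' hX hZ
  have hb_int : Integrable b (μ.map X) :=
    (integrable_map_measure hb.aestronglyMeasurable hX.aemeasurable).2
      (integrable_condExp.congr h_condExp)
  suffices hb_zero : ∀ᵐ x ∂μ.map X, b x = 0 by
    filter_upwards [h_condExp, ae_of_ae_map hX.aemeasurable hb_zero] with ω hω hω_zero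
    exact hω.trans hω_zero
  refine ae_eq_zero_of_integral_contDiff_smul_eq_zero hb_int.locallyIntegrable
    fun g hg hg_supp => ?_
  let f : C_c(E, ℝ) := ⟨⟨g, hg.continuous⟩, hg_supp⟩
  have hfX : StronglyMeasurable[.comap X inferInstance] (f ∘ X) :=
    f.continuous.stronglyMeasurable.comp_measurable (comap_measurable X)
  obtain ⟨C, hC⟩ := hg_supp.exists_bound_of_continuous hg.continuous
  have hfZ : Integrable ((f ∘ X) • Z) μ :=
    hZ.bdd_smul C (hfX.mono hX.comap_le).aestronglyMeasurable (ae_of_all _ fun ω => hC (X ω))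
  calc ∫ x, g x • b x ∂μ.map X
      = ∫ ω, f (X ω) • b (X ω) ∂μ := integral_map hX.aemeasurable
        (hg.continuous.aestronglyMeasurable.smul hb.aestronglyMeasurable)
    _ = ∫ ω, (μ[(f ∘ X) • Z | .comap X inferInstance]) ω ∂μ := by
      refine integral_congr_ae ?_
      filter_upwards [h_condExp,
        condExp_smul_of_aestronglyMeasurable_left hfX.aestronglyMeasurable hfZ hZ] with ω hω hω_smul
      rw [hω_smul]
      exact congrArg (f (X ω) • ·) hω.symm
    _ = 0 := (integral_condExp hX.comap_le).trans (h f)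

theorem isMartingaleCoupling_of_forall_integral_eq {d : ℕ} {π : Measure (Euc d × Euc d)}
    [IsFiniteMeasure π] (hX : Integrable (fun z : Euc d × Euc d => z.1) π)
    (hY : Integrable (fun z : Euc d × Euc d => z.2) π)
    (h : ∀ (f : C_c(Euc d, ℝ)) (i : Fin d), ∫ z, f z.1 * (z.2 i - z.1 i) ∂π = 0) :
    IsMartingaleCoupling π := by
  have h_zero : π[(fun z : Euc d × Euc d => z.2) - (fun z => z.1) | fstSigma d] =ᵐ[π] 0 := by
    refine condExp_comap_ae_eq_zero measurable_fst (hY.sub hX) fun f => ?_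
    obtain ⟨C, hC⟩ := f.hasCompactSupport.exists_bound_of_continuous f.continuous
    have h_int : Integrable (fun z : Euc d × Euc d => f z.1 • (z.2 - z.1)) π :=
      (hY.sub hX).bdd_smul C (f.continuous.comp continuous_fst).aestronglyMeasurable
        (ae_of_all _ fun z => hC z.1)
    ext i
    exact ((EuclideanSpace.proj i).integral_comp_comm h_int).symm.trans (h f i)
  have h_fst : π[fun z => z.1 | fstSigma d] = fun z => z.1 :=
    condExp_of_stronglyMeasurable measurable_fst.comap_le
      (comap_measurable Prod.fst).stronglyMeasurable hX
  have h_sub := condExp_sub hY hX (fstSigma d)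
  rw [h_fst] at h_sub
  filter_upwards [h_zero, h_sub] with z hz hz_sub
  exact sub_eq_zero.1 (hz_sub.symm.trans hz)

theorem abs_integral_comp_mul_sub_le {Ω V : Type*} [MeasurableSpace Ω] [TopologicalSpace V]
    [MeasurableSpace V] [BorelSpace V] {μ : Measure Ω} {X : Ω → V} {ψ : Ω → ℝ} (hX : Measurable X)
    (hψ : Integrable ψ μ) {f g : C_c(V, ℝ)} {ε : ℝ} (h : ∀ x, |f x - g x| ≤ ε) :
    |∫ ω, f (X ω) * ψ ω ∂μ - ∫ ω, g (X ω) * ψ ω ∂μ| ≤ ε * ∫ ω, |ψ ω| ∂μ := by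
  have h_int (f : C_c(V, ℝ)) : Integrable (fun ω => f (X ω) * ψ ω) μ := by
    obtain ⟨C, hC⟩ := f.hasCompactSupport.exists_bound_of_continuous f.continuous
    exact hψ.bdd_mul (f.continuous.measurable.comp hX).aestronglyMeasurable
      (ae_of_all _ fun ω => hC (X ω))
  rw [← integral_sub (h_int f) (h_int g), ← integral_const_mul, ← Real.norm_eq_abs]
  refine norm_integral_le_of_norm_le (hψ.abs.const_mul ε) (ae_of_all _ fun ω => ?_)
  rw [← sub_mul, norm_mul]
  exact mul_le_mul_of_nonneg_right (h (X ω)) (abs_nonneg _)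

theorem tendsto_integral_comp_mul {Ω V : Type*} [MeasurableSpace Ω] [TopologicalSpace V]
    [MeasurableSpace V] [BorelSpace V] {μ : Measure Ω} {X : Ω → V} {ψ : Ω → ℝ} (hX : Measurable X)
    (hψ : Integrable ψ μ) {f : C_c(V, ℝ)} {g : ℕ → C_c(V, ℝ)} {ε : ℕ → ℝ}
    (hε : Tendsto ε atTop (nhds 0)) (h : ∀ n x, |f x - g n x| ≤ ε n) :
    Tendsto (fun n => ∫ ω, g n (X ω) * ψ ω ∂μ) atTop (nhds (∫ ω, f (X ω) * ψ ω ∂μ)) := by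
  have h_lim := hε.mul_const (∫ ω, |ψ ω| ∂μ)
  rw [zero_mul] at h_lim
  refine tendsto_iff_dist_tendsto_zero.2 (squeeze_zero (fun n => dist_nonneg) (fun n => ?_) h_lim)
  rw [dist_comm]
  exact abs_integral_comp_mul_sub_le hX hψ (h n)

theorem integral_comp_mul_eq_of_forall_seq {Ω Ω' V : Type*} [MeasurableSpace Ω]
    [MeasurableSpace Ω'] [TopologicalSpace V] [MeasurableSpace V] [BorelSpace V]
    {a : ℕ → C_c(V, ℝ)} (ha : UniformlyDense a) {μ : Measure Ω} {X : Ω → V} {ψ : Ω → ℝ}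
    (hX : Measurable X) (hψ : Integrable ψ μ) {μ' : Measure Ω'} {X' : Ω' → V} {ψ' : Ω' → ℝ}
    (hX' : Measurable X') (hψ' : Integrable ψ' μ')
    (h : ∀ n, ∫ ω, a n (X ω) * ψ ω ∂μ = ∫ ω, a n (X' ω) * ψ' ω ∂μ') (f : C_c(V, ℝ)) :
    ∫ ω, f (X ω) * ψ ω ∂μ = ∫ ω, f (X' ω) * ψ' ω ∂μ' := by
  choose n hn using fun k : ℕ => ha f (1 / (k + 1)) Nat.one_div_pos_of_nat
  refine tendsto_nhds_unique
    (tendsto_integral_comp_mul hX hψ tendsto_one_div_add_atTop_nhds_zero_nat hn) ?_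
  simpa only [h] using
    tendsto_integral_comp_mul hX' hψ' tendsto_one_div_add_atTop_nhds_zero_nat hn

theorem map_eq_of_forall_integral_comp_eq {Ω V : Type*} [MeasurableSpace Ω] [NormedAddCommGroup V]
    [ProperSpace V] [MeasurableSpace V] [BorelSpace V] {a : ℕ → C_c(V, ℝ)}
    (ha : UniformlyDense a) {π : Measure Ω} [IsFiniteMeasure π] {X : Ω → V} (hX : Measurable X)
    {μ : Measure V} [IsFiniteMeasure μ]
    (h : ∀ n, ∫ ω, a n (X ω) ∂π = ∫ x, a n x ∂μ) : π.map X = μ := by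
  refine Measure.ext_of_integral_eq_on_compactlySupported fun f => ?_
  refine (integral_map hX.aemeasurable f.continuous.aestronglyMeasurable).trans ?_
  simpa using integral_comp_mul_eq_of_forall_seq ha hX (integrable_const (1 : ℝ)) measurable_id
    (integrable_const (1 : ℝ)) (by simpa using h) f

end TestFunctions

section NormWeight

variable {E F : Type*} [NormedAddCommGroup E] [NormedAddCommGroup F]

/-- The weight `1 + ‖x‖`, whose growth space consists of the functions of at most linear growth. -/
def normWeight (E : Type*) [NormedAddCommGroup E] : C(E, ℝ) := ⟨fun x => 1 + ‖x‖, by fun_prop⟩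

theorem one_le_normWeight : 1 ≤ normWeight E := fun x => le_add_of_nonneg_right (norm_nonneg x)

theorem integrable_normWeight [MeasurableSpace E] {μ : Measure E} [IsFiniteMeasure μ]
    (hμ : Integrable (fun x => x) μ) : Integrable (normWeight E) μ :=
  (integrable_const 1).add hμ.norm

theorem norm_le_normWeight (x : E) : ‖x‖ ≤ normWeight E x := le_add_of_nonneg_left zero_le_one

theorem comp_mem_growthSpace_normWeight {f : C(E, ℝ)} (hf : f ∈ growthSpace (normWeight E))
    {p : C(F, E)} (hp : ∀ z, ‖p z‖ ≤ ‖z‖) : f.comp p ∈ growthSpace (normWeight F) := by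
  refine (hf.comp_tendsto tendsto_top).trans (Asymptotics.IsBigO.of_norm_le fun z => ?_)
  refine (Real.norm_of_nonneg (zero_le_one.trans (one_le_normWeight (p z)))).trans_le ?_
  exact add_le_add_right (hp z) 1

open growthSpace

theorem weight_normWeight_prod_le (z : E × F) :
    (weight (normWeight (E × F))).1 z ≤
      (weight (normWeight E)).1 z.1 + (weight (normWeight F)).1 z.2 := by
  change 1 + max ‖z.1‖ ‖z.2‖ ≤ (1 + ‖z.1‖) + (1 + ‖z.2‖)
  obtain h | h := max_choice ‖z.1‖ ‖z.2‖ <;> rw [h]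
  · exact le_add_of_nonneg_right (zero_le_one.trans (one_le_normWeight z.2))
  · exact le_add_of_nonneg_left (zero_le_one.trans (one_le_normWeight z.1))

theorem tail_normWeight_apply [ProperSpace E] (n : ℕ) (x : E) :
    (tail one_le_normWeight n : growthSpace (normWeight E)).1 x =
      1 + ‖x‖ - (1 + ‖x‖) * max 0 (min 1 (n + 1 - ‖x‖)) := rfl

theorem tail_normWeight_prod_le [ProperSpace E] [ProperSpace F] (n : ℕ) (z : E × F) :
    (tail one_le_normWeight n : growthSpace (normWeight (E × F))).1 z ≤
      (tail one_le_normWeight n : growthSpace (normWeight E)).1 z.1 +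
        (tail one_le_normWeight n : growthSpace (normWeight F)).1 z.2 := by
  have h_fst := tail_nonneg one_le_normWeight n z.1
  have h_snd := tail_nonneg one_le_normWeight n z.2
  rw [tail_normWeight_apply, Prod.norm_def]
  obtain h | h := max_choice ‖z.1‖ ‖z.2‖ <;> rw [h]
  · exact le_add_of_nonneg_right h_snd
  · exact le_add_of_nonneg_left h_fst

end NormWeight

section CouplingTest

open scoped CompactlySupported

open growthSpace

theorem exists_countable_submodule_subset {M : Type*} [AddCommGroup M] [Module ℚ M] {s : Set M}
    (hs : s.Countable) : ∃ V : Submodule ℚ M, Countable V ∧ s ⊆ V := by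
  have := hs.to_subtype
  exact ⟨.span ℚ (Set.range ((↑) : s → M)), inferInstance, by
    simpa only [Subtype.range_coe] using Submodule.subset_span⟩

variable {d : ℕ} {V : Submodule ℚ (growthSpace (normWeight (Euc d)))}
  {H : Submodule ℚ C_c(Euc d, ℝ)}

theorem comp_fst_mul_sub_mem_growthSpace (h : C_c(Euc d, ℝ)) (i : Fin d) :
    (h.toContinuousMap.comp .fst * ⟨fun z : Euc d × Euc d => z.2 i - z.1 i, by fun_prop⟩) ∈
      growthSpace (normWeight (Euc d × Euc d)) := by
  obtain ⟨C, hC⟩ := h.hasCompactSupport.exists_bound_of_continuous h.continuous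
  refine Asymptotics.isBigO_top.2 ⟨C * 2, fun z => ?_⟩
  have h_sub : ‖z.2 i - z.1 i‖ ≤ 2 * ‖normWeight (Euc d × Euc d) z‖ := by
    have h_fst := (PiLp.norm_apply_le z.1 i).trans (norm_fst_le z)
    have h_snd := (PiLp.norm_apply_le z.2 i).trans (norm_snd_le z)
    have h_weight : 1 + ‖z‖ ≤ ‖normWeight (Euc d × Euc d) z‖ := le_abs_self _
    exact (norm_sub_le _ _).trans (by linarith)
  calc ‖h z.1 * (z.2 i - z.1 i)‖
      = ‖h z.1‖ * ‖z.2 i - z.1 i‖ := norm_mul _ _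
    _ ≤ C * (2 * ‖normWeight (Euc d × Euc d) z‖) :=
      mul_le_mul (hC _) h_sub (norm_nonneg _) ((norm_nonneg _).trans (hC z.1))
    _ = C * 2 * ‖normWeight (Euc d × Euc d) z‖ := (mul_assoc _ _ _).symm

/-- The test functions `f(x) + g(y) + ∑ i, h_i(x) (y_i - x_i)`, whose integrals determine the
marginals of a measure and whether it is a martingale coupling. -/
def couplingTest (V : Submodule ℚ (growthSpace (normWeight (Euc d))))
    (H : Submodule ℚ C_c(Euc d, ℝ)) :
    V × V × (Fin d → H) →ₗ[ℚ] growthSpace (normWeight (Euc d × Euc d)) where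
  toFun c :=
    ⟨c.1.1.1.comp .fst, comp_mem_growthSpace_normWeight c.1.1.2 norm_fst_le⟩ +
      ⟨c.2.1.1.1.comp .snd, comp_mem_growthSpace_normWeight c.2.1.1.2 norm_snd_le⟩ +
      ∑ i, ⟨_, comp_fst_mul_sub_mem_growthSpace (c.2.2 i).1 i⟩
  map_add' b c := by
    ext z
    simp only [Prod.fst_add, Prod.snd_add, Pi.add_apply, Submodule.coe_add,
      AddSubmonoidClass.coe_finsetSum, ContinuousMap.add_apply, ContinuousMap.comp_apply,
      ContinuousMap.fst_apply, ContinuousMap.snd_apply, ContinuousMap.sum_apply,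
      ContinuousMap.mul_apply, ContinuousMap.coe_mk, CompactlySupportedContinuousMap.coe_add,
      CompactlySupportedContinuousMap.coe_toContinuousMap, add_mul, Finset.sum_add_distrib]
    ring
  map_smul' r c := by
    ext z
    simp [Finset.mul_sum, mul_assoc, Rat.smul_def]

theorem couplingTest_apply (c : V × V × (Fin d → H)) (z : Euc d × Euc d) :
    (couplingTest V H c).1 z =
      c.1.1.1 z.1 + c.2.1.1.1 z.2 + ∑ i, (c.2.2 i).1 z.1 * (z.2 i - z.1 i) := by
  simp [couplingTest]

theorem couplingTest_single_apply (i : Fin d) (h : H) (z : Euc d × Euc d) :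
    (couplingTest V H (0, 0, Pi.single i h)).1 z = h.1 z.1 * (z.2 i - z.1 i) := by
  rw [couplingTest_apply, Finset.sum_eq_single i (fun j _ hji => by simp [hji]) (by simp)]
  simp

variable {μ ν : Measure (Euc d)}

/-- The integral of a test function in `couplingTest` under any martingale coupling of `μ` and
`ν`. -/
def couplingMoment (hμ : Integrable (normWeight (Euc d)) μ)
    (hν : Integrable (normWeight (Euc d)) ν) (V : Submodule ℚ (growthSpace (normWeight (Euc d))))
    (H : Submodule ℚ C_c(Euc d, ℝ)) : V × V × (Fin d → H) →ₗ[ℚ] ℝ :=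
  ((integralHom hμ).toRatLinearMap.domRestrict V).coprod
    (((integralHom hν).toRatLinearMap.domRestrict V).coprod 0)

theorem couplingMoment_apply (hμ : Integrable (normWeight (Euc d)) μ)
    (hν : Integrable (normWeight (Euc d)) ν) (c : V × V × (Fin d → H)) :
    couplingMoment hμ hν V H c = ∫ x, c.1.1.1 x ∂μ + ∫ y, c.2.1.1.1 y ∂ν := by
  simp [couplingMoment, integralHom]

theorem couplingMoment_nonneg (hμ : Integrable (normWeight (Euc d)) μ)
    (hν : Integrable (normWeight (Euc d)) ν) (hμν : ConvexOrder μ ν) {c : V × V × (Fin d → H)}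
    (hc : 0 ≤ couplingTest V H c) : 0 ≤ couplingMoment hμ hν V H c := by
  have h_int (F : growthSpace (normWeight (Euc d))) : Integrable F.1 (μ + ν) :=
    growthSpace.integrable (hμ.add_measure hν) F
  rw [couplingMoment_apply]
  refine hμν.integral_add_integral_nonneg (h_int _) (h_int _)
    (ℓ := fun x => ∑ i, (c.2.2 i).1 x • (EuclideanSpace.proj i : Euc d →L[ℝ] ℝ).toLinearMap)
    fun x y => ?_
  have h : 0 ≤ (couplingTest V H c).1 (x, y) := hc (x, y)
  rw [couplingTest_apply] at h
  simpa using h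

theorem exists_kernel_forall_integral_couplingTest_eq {S : Type*} [MeasurableSpace S]
    {P Q : Kernel S (Euc d)} (hP : ∀ θ, Integrable (normWeight (Euc d)) (P θ))
    (hQ : ∀ θ, Integrable (normWeight (Euc d)) (Q θ)) (hPQ : ∀ θ, ConvexOrder (P θ) (Q θ))
    [Countable V] [Countable H] (hwV : weight _ ∈ V) (htV : ∀ n, tail one_le_normWeight n ∈ V) :
    ∃ π : Kernel S (Euc d × Euc d), ∀ θ, Integrable (normWeight _) (π θ) ∧
      ∀ c, ∫ z, (couplingTest V H c).1 z ∂π θ = couplingMoment (hP θ) (hQ θ) V H c := by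
  let e : V := ⟨weight _, hwV⟩
  let t (n : ℕ) : V := ⟨tail one_le_normWeight n, htV n⟩
  have he : weight _ ≤ couplingTest V H (e, e, 0) := fun z =>
    (weight_normWeight_prod_le z).trans_eq (by simp [couplingTest_apply, e])
  have ht (n : ℕ) : tail one_le_normWeight n ≤ couplingTest V H (t n, t n, 0) := fun z =>
    (tail_normWeight_prod_le n z).trans_eq (by simp [couplingTest_apply, t])
  refine exists_kernel_forall_integral_eq (D := V × V × (Fin d → H)) (fun c => ?_)
    one_le_normWeight (fun θ c => couplingMoment_nonneg (hP θ) (hQ θ) (hPQ θ)) he ht fun θ => ?_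
  · simp only [couplingMoment_apply]
    exact (c.1.1.1.continuous.stronglyMeasurable.integral_kernel).measurable.add
      (c.2.1.1.1.continuous.stronglyMeasurable.integral_kernel).measurable
  · simpa only [couplingMoment_apply, add_zero] using
      (tendsto_integral_tail (hP θ) one_le_normWeight).add
        (tendsto_integral_tail (hQ θ) one_le_normWeight)

variable {a : ℕ → C_c(Euc d, ℝ)} {π : Measure (Euc d × Euc d)}

theorem isCoupling_of_forall_integral_couplingTest_eq [IsFiniteMeasure π] [IsFiniteMeasure μ]
    [IsFiniteMeasure ν] (hμ : Integrable (normWeight (Euc d)) μ)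
    (hν : Integrable (normWeight (Euc d)) ν)
    (h : ∀ c, ∫ z, (couplingTest V H c).1 z ∂π = couplingMoment hμ hν V H c)
    (ha : UniformlyDense a) (haV : ∀ n, ofCompactlySupported one_le_normWeight (a n) ∈ V) :
    IsCoupling π μ ν := by
  constructor
  · refine map_eq_of_forall_integral_comp_eq ha measurable_fst fun n => ?_
    simpa [couplingTest_apply, couplingMoment_apply, ofCompactlySupported_apply] using
      h (⟨_, haV n⟩, 0, 0)
  · refine map_eq_of_forall_integral_comp_eq ha measurable_snd fun n => ?_
    simpa [couplingTest_apply, couplingMoment_apply, ofCompactlySupported_apply] using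
      h (0, ⟨_, haV n⟩, 0)

theorem isMartingaleCoupling_of_forall_integral_couplingTest_eq
    (hπ : Integrable (normWeight (Euc d × Euc d)) π) (hμ : Integrable (normWeight (Euc d)) μ)
    (hν : Integrable (normWeight (Euc d)) ν)
    (h : ∀ c, ∫ z, (couplingTest V H c).1 z ∂π = couplingMoment hμ hν V H c)
    (ha : UniformlyDense a) (haH : ∀ n, a n ∈ H) : IsMartingaleCoupling π := by
  have := isFiniteMeasure_of_integrable_of_one_le hπ one_le_normWeight
  have hX : Integrable (fun z : Euc d × Euc d => z.1) π :=
    hπ.mono' continuous_fst.aestronglyMeasurable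
      (ae_of_all _ fun z => (norm_fst_le z).trans (norm_le_normWeight z))
  have hY : Integrable (fun z : Euc d × Euc d => z.2) π :=
    hπ.mono' continuous_snd.aestronglyMeasurable
      (ae_of_all _ fun z => (norm_snd_le z).trans (norm_le_normWeight z))
  refine isMartingaleCoupling_of_forall_integral_eq hX hY fun f i => ?_
  have hψ : Integrable (fun z : Euc d × Euc d => z.2 i - z.1 i) π :=
    (EuclideanSpace.proj i : Euc d →L[ℝ] ℝ).integrable_comp (hY.sub hX)
  have h_zero := integral_comp_mul_eq_of_forall_seq ha measurable_fst hψ measurable_fst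
    (integrable_zero _ ℝ π) (fun n => ?_) f
  · simpa using h_zero
  · simpa [couplingTest_single_apply, couplingMoment_apply] using
      h (0, 0, Pi.single i ⟨a n, haH n⟩)

end CouplingTest

theorem exists_kernel_isMartingaleCoupling {d : ℕ} {S : Type*} [MeasurableSpace S]
    {P Q : Kernel S (Euc d)} [IsMarkovKernel P] [IsMarkovKernel Q]
    (hP : ∀ θ, FiniteFirstMoment (P θ)) (hQ : ∀ θ, FiniteFirstMoment (Q θ))
    (hPQ : ∀ θ, ConvexOrder (P θ) (Q θ)) :
    ∃ R : Kernel S (Euc d × Euc d), IsMarkovKernel R ∧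
      ∀ θ, IsCoupling (R θ) (P θ) (Q θ) ∧ IsMartingaleCoupling (R θ) := by
  obtain ⟨a, ha⟩ := exists_uniformlyDense (Euc d)
  obtain ⟨H, _, haH⟩ := exists_countable_submodule_subset (Set.countable_range a)
  obtain ⟨V, _, hV⟩ := exists_countable_submodule_subset
    (((Set.countable_range fun n => growthSpace.tail (one_le_normWeight (E := Euc d)) n).union
      (Set.countable_range fun n =>
        growthSpace.ofCompactlySupported one_le_normWeight (a n))).insert (growthSpace.weight _))
  obtain ⟨R, hR⟩ := exists_kernel_forall_integral_couplingTest_eq (V := V) (H := H)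
    (fun θ => integrable_normWeight (hP θ)) (fun θ => integrable_normWeight (hQ θ)) hPQ
    (hV (.inl rfl)) fun n => hV (.inr (.inl ⟨n, rfl⟩))
  have hR_fin (θ : S) : IsFiniteMeasure (R θ) :=
    isFiniteMeasure_of_integrable_of_one_le (hR θ).1 one_le_normWeight
  have hR_coupling (θ : S) : IsCoupling (R θ) (P θ) (Q θ) :=
    isCoupling_of_forall_integral_couplingTest_eq _ _ (hR θ).2 ha
      fun n => hV (.inr (.inr ⟨n, rfl⟩))
  refine ⟨R, ⟨fun θ => ?_⟩, fun θ => ⟨hR_coupling θ, ?_⟩⟩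
  · have : IsProbabilityMeasure ((R θ).map Prod.fst) := by rw [(hR_coupling θ).1]; infer_instance
    exact Measure.isProbabilityMeasure_of_map Prod.fst
  · exact isMartingaleCoupling_of_forall_integral_couplingTest_eq (hR θ).1 _ _ (hR θ).2 ha
      fun n => haH ⟨n, rfl⟩

/-- Kernel version of Strassen's theorem (convex order): P_θ ≤cx Q_θ for all θ iff
P and Q admit a pointwise martingale coupling. -/
theorem strassen_kernel_martingale_coupling
    (d : ℕ) (hd : 1 ≤ d) {S : Type} [MeasurableSpace S]
    (P Q : Kernel S (Euc d)) [IsMarkovKernel P] [IsMarkovKernel Q]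
    (hP : ∀ θ, FiniteFirstMoment (P θ)) (hQ : ∀ θ, FiniteFirstMoment (Q θ)) :
    (∀ θ, ConvexOrder (P θ) (Q θ)) ↔
      ∃ R : Kernel S (Euc d × Euc d), IsMarkovKernel R ∧
        ∀ θ, IsCoupling (R θ) (P θ) (Q θ) ∧ IsMartingaleCoupling (R θ) := by
  refine ⟨exists_kernel_isMartingaleCoupling hP hQ, ?_⟩
  rintro ⟨R, _, hR⟩ θ
  exact (hR θ).2.convexOrder (hR θ).1 (hQ θ)
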